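/- Let ℂ̂ = ℂ ∪ {∞} denote the one-point compactification of ℂ (a topological 2-sphere). Let Γ ⊆ ℂ̂ be a union of finitely many pairwise disjoint Jordan curves, let L ⊆ ℂ̂ be a compact subset, and let D be a Jordan domain containing L. Then there exists an integer N ≥ 0 such that for any two distinct points z₁, z₂ ∈ L there exists a Jordan arc δ ⊆ D joining z₁ to z₂ for which the intersection δ ∩ Γ is a finite set with at most N points. -/

import Mathlib

noncomputable section

/-- A Jordan curve in the Riemann sphere `ℂ̂ = OnePoint ℂ`: the image of the
unit circle under an injective continuous map. -/
def IsJordanCurveS (C : Set (OnePoint ℂ)) : Prop :=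
  ∃ f : (Metric.sphere (0 : ℂ) 1 : Set ℂ) → OnePoint ℂ,
    Continuous f ∧ Function.Injective f ∧ Set.range f = C

/-- A Jordan arc in `ℂ̂` joining `z₁` to `z₂`: the image of an injective
continuous map from `[0,1]` sending `0 ↦ z₁` and `1 ↦ z₂`. -/
def IsJordanArcS (δ : Set (OnePoint ℂ)) (z₁ z₂ : OnePoint ℂ) : Prop :=
  ∃ f : ℝ → OnePoint ℂ, ContinuousOn f (Set.Icc 0 1) ∧
    Set.InjOn f (Set.Icc 0 1) ∧ f '' Set.Icc 0 1 = δ ∧ f 0 = z₁ ∧ f 1 = z₂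

section Helpers

open Set Metric Topology

lemma exists_log_of_simply {A : Type*} [TopologicalSpace A] [SimplyConnectedSpace A]
    [LocallyPathConnectedSpace A] [Inhabited A] (g : A → ℂ) (hg : Continuous g) (h0 : ∀ x, g x ≠ 0) :
    ∃ u : A → ℂ, Continuous u ∧ ∀ x, Complex.exp (u x) = g x := by
  obtain ⟨F, ⟨-, hF⟩, -⟩ := Complex.isCoveringMapOn_exp.existsUnique_continuousMap_lifts
    (⟨g, hg⟩ : C(A, ℂ)) (a₀ := default) (e₀ := Complex.log (g default))
    (Complex.exp_log (h0 _)) (fun a => h0 a)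
  exact ⟨F, F.continuous, fun x => congrFun hF x⟩

lemma exists_log_arc {a b : ℝ} (hab : a ≤ b) (σ : ℝ → ℂ) (hσ : ContinuousOn σ (Icc a b))
    (hi : InjOn σ (Icc a b)) (g : ℂ → ℂ) (hg : ContinuousOn g (σ '' Icc a b))
    (h0 : ∀ z ∈ σ '' Icc a b, g z ≠ 0) :
    ∃ u : ℂ → ℂ, ContinuousOn u (σ '' Icc a b) ∧ ∀ z ∈ σ '' Icc a b, Complex.exp (u z) = g z := by
  let φ : Icc a b → ℂ := fun t => σ t
  have hφ : IsClosedEmbedding φ := by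
    apply Continuous.isClosedEmbedding
    · exact hσ.domRestrict
    · intro x y h; exact Subtype.ext (hi x.2 y.2 h)
  have hG : Continuous (fun t : ℝ => g (σ (projIcc a b hab t))) := by
    have h1 : Continuous (fun t : ℝ => φ (projIcc a b hab t)) := hφ.continuous.comp continuous_projIcc
    exact hg.comp_continuous h1 (fun t => mem_image_of_mem _ (projIcc a b hab t).2)
  obtain ⟨u, hu, hu2⟩ := exists_log_of_simply _ hG
    (fun t => h0 _ (mem_image_of_mem _ (projIcc a b hab t).2))
  obtain ⟨v, hv⟩ := ContinuousMap.exists_extension (Y := ℂ) hφ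
    (⟨fun t : Icc a b => u t, hu.comp continuous_subtype_val⟩ : C(Icc a b, ℂ))
  refine ⟨v, v.continuous.continuousOn, ?_⟩
  rintro _ ⟨t, ht, rfl⟩
  have h := congrArg (fun f : C(Icc a b, ℂ) => f ⟨t, ht⟩) hv
  have h' : v (σ t) = u t := h
  rw [h', hu2, projIcc_of_mem hab ht]

lemma winding_zero {U : Set ℂ} (hU : IsOpen U) (hb : Bornology.IsBounded U) {a : ℂ} (ha : a ∈ U)
    (h f : ℂ → ℂ) (hh : ContinuousOn h (closure U)) (h0 : ∀ z ∈ closure U, h z ≠ 0)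
    (hf : ContinuousOn f (frontier U)) (l : ℤ)
    (heq : ∀ z ∈ frontier U, (z - a) ^ l = h z * Complex.exp (f z)) : l = 0 := by
  classical
  obtain ⟨v, hv⟩ := ContinuousMap.exists_restrict_eq (Y := ℂ) (isClosed_frontier (s := U))
    (⟨(frontier U).domRestrict f, hf.domRestrict⟩ : C(frontier U, ℂ))
  have hv' : ∀ z ∈ frontier U, v z = f z := fun z hz =>
    congrArg (fun F : C(frontier U, ℂ) => F ⟨z, hz⟩) hv
  let F : ℂ → ℂ := fun z => if z ∈ closure U then h z * Complex.exp (v z) else (z - a) ^ l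
  have hF1 : ∀ z ∈ closure U, F z = h z * Complex.exp (v z) := fun z hz => if_pos hz
  have hF2 : ∀ z ∈ Uᶜ, F z = (z - a) ^ l := by
    intro z hz
    by_cases hz' : z ∈ closure U
    · have : z ∈ frontier U := by rw [hU.frontier_eq]; exact ⟨hz', hz⟩
      rw [hF1 z hz', heq z this, hv' z this]
    · exact if_neg hz'
  have hne : ∀ z ∈ Uᶜ, z - a ≠ 0 := by
    intro z hz h; rw [sub_eq_zero] at h; exact hz (h ▸ ha)
  have hFc : Continuous F := by
    rw [← continuousOn_univ, ← union_compl_self U]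
    have : ContinuousOn F (closure U ∪ Uᶜ) := by
      refine ContinuousOn.union_of_isClosed ?_ ?_ isClosed_closure hU.isClosed_compl
      · exact (hh.mul (by fun_prop)).congr hF1
      · refine ContinuousOn.congr ?_ hF2
        exact ContinuousOn.zpow₀ (by fun_prop) l (fun z hz => Or.inl (hne z hz))
    exact this.mono (union_subset_union_left _ subset_closure)
  have hF0 : ∀ z, F z ≠ 0 := by
    intro z
    by_cases hz : z ∈ closure U
    · rw [hF1 z hz]; exact mul_ne_zero (h0 z hz) (Complex.exp_ne_zero _)
    · have : z ∈ Uᶜ := fun h => hz (subset_closure h)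
      rw [hF2 z this]; exact zpow_ne_zero _ (hne z this)
  obtain ⟨G, hG, hG2⟩ := exists_log_of_simply F hFc hF0
  obtain ⟨R, hR0, hR⟩ : ∃ R : ℝ, 0 < R ∧ U ⊆ ball a R := by
    obtain ⟨R, hR⟩ := hb.subset_ball_lt 0 a
    exact ⟨R, hR.1, hR.2⟩
  let c : ℝ → ℂ := fun t => a + R * Complex.exp (t * Complex.I)
  have hc : Continuous c := by fun_prop
  have hcU : ∀ t, c t ∈ Uᶜ := by
    intro t ht
    have := hR ht
    rw [mem_ball, dist_eq_norm] at this
    simp only [c, add_sub_cancel_left, norm_mul, Complex.norm_exp_ofReal_mul_I, mul_one,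
      Complex.norm_real, Real.norm_eq_abs, abs_of_pos hR0] at this
    exact lt_irrefl _ this
  let k : ℝ → ℂ := fun t => G (c t) - l * t * Complex.I
  have hk : Continuous k := by fun_prop
  have hke : ∀ t, Complex.exp (k t) = (R : ℂ) ^ l := by
    intro t
    simp only [k]
    rw [Complex.exp_sub, hG2, hF2 _ (hcU t)]
    simp only [c, add_sub_cancel_left, mul_zpow]
    rw [← Complex.exp_int_mul, mul_assoc, mul_div_assoc, div_self (Complex.exp_ne_zero _), mul_one]
  have hconst : k 0 = k (2 * Real.pi) := by
    have hcov := Complex.isCoveringMapOn_exp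
    have := IsCoveringMap.eq_of_comp_eq Complex.isCoveringMap_exp hk
      (continuous_const (y := k 0)) (by
        funext t; apply Subtype.ext; simp [hke]) (0 : ℝ) rfl
    exact (congrFun this (2 * Real.pi)).symm
  have hcc : c 0 = c (2 * Real.pi) := by
    simp [c]
  simp only [k, hcc] at hconst
  have : (l : ℂ) * ((2 * Real.pi : ℝ) : ℂ) * Complex.I = 0 := by
    have := sub_right_injective hconst
    rw [← this]; simp
  have hpi : ((2 * Real.pi : ℝ) : ℂ) ≠ 0 := by
    exact_mod_cast (by positivity : (2 * Real.pi) ≠ 0)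
  simpa [Complex.I_ne_zero, Real.pi_ne_zero] using this

lemma frontier_pathComponentIn {X : Type*} [TopologicalSpace X] [LocallyPathConnectedSpace X]
    {F : Set X} (hF : IsOpen F) (x : X) : frontier (pathComponentIn F x) ⊆ Fᶜ := by
  intro y hy hyF
  have ho := hF.pathComponentIn x
  rw [ho.frontier_eq] at hy
  obtain ⟨w, hw1, hw2⟩ := mem_closure_iff.1 hy.1 _ (hF.pathComponentIn y)
    (mem_pathComponentIn_self hyF)
  have h1 : JoinedIn F y w := hw1
  have h2 : JoinedIn F x w := hw2
  exact hy.2 (h2.trans h1.symm)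

lemma log_outside (q : ℂ) {r : ℝ} {S : Set ℂ} (hS : Disjoint (ball q r) S) {x y : ℂ}
    (hx : x ∈ ball q r) (hy : y ∈ ball q r) :
    ∃ u : ℂ → ℂ, ContinuousOn u S ∧ ∀ z ∈ S, z - x = (z - y) * Complex.exp (u z) := by
  have key : ∀ w ∈ ball q r, ∀ z ∈ S, z - q ≠ 0 ∧ 1 - (w - q) / (z - q) ∈ Complex.slitPlane := by
    intro w hw z hz
    have hz' : r ≤ ‖z - q‖ := by
      by_contra h
      push Not at h
      exact hS.le_bot ⟨by rwa [mem_ball, dist_eq_norm], hz⟩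
    have hw' : ‖w - q‖ < r := by rwa [mem_ball, dist_eq_norm] at hw
    have hr : 0 < r := lt_of_le_of_lt (norm_nonneg _) hw'
    have hzq : 0 < ‖z - q‖ := hr.trans_le hz'
    refine ⟨norm_pos_iff.1 hzq, ?_⟩
    have h1 : ‖-((w - q) / (z - q))‖ < 1 := by
      rw [norm_neg, norm_div, div_lt_one hzq]; exact hw'.trans_le hz'
    rw [sub_eq_add_neg]
    exact Complex.mem_slitPlane_of_norm_lt_one h1
  refine ⟨fun z => Complex.log (1 - (x - q) / (z - q)) - Complex.log (1 - (y - q) / (z - q)), ?_, ?_⟩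
  · have hc : ∀ w ∈ ball q r, ContinuousOn (fun z => Complex.log (1 - (w - q) / (z - q))) S := by
      intro w hw
      refine ContinuousOn.clog ?_ (fun z hz => (key w hw z hz).2)
      exact continuousOn_const.sub (continuousOn_const.div (by fun_prop)
        (fun z hz => (key w hw z hz).1))
    exact (hc x hx).sub (hc y hy)
  · intro z hz
    obtain ⟨h1, h2⟩ := key x hx z hz
    obtain ⟨-, h3⟩ := key y hy z hz
    have h2 := Complex.slitPlane_ne_zero h2
    have h3 := Complex.slitPlane_ne_zero h3
    dsimp only
    rw [Complex.exp_sub, Complex.exp_log h2, Complex.exp_log h3]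
    have e : ∀ w : ℂ, z - w = (z - q) * (1 - (w - q) / (z - q)) := by
      intro w; field_simp; ring
    rw [e x, e y, mul_assoc, mul_div_cancel₀ _ h3]

/-- A logarithm identity on the closed set forces `x` to be joined to one of `y`, `w`. -/
lemma joined_of_log {F K : Set ℂ} (hF : IsOpen F) (hb : Bornology.IsBounded F)
    (hK : closure F \ F ⊆ K) {x y w : ℂ} (hx : x ∈ F) (hy : y ∈ F) (hw : w ∈ F)
    (u : ℂ → ℂ) (hu : ContinuousOn u K) (s m n : ℤ) (hs : s ≠ 0)
    (he : ∀ z ∈ K, (z - x) ^ s = (z - y) ^ m * (z - w) ^ n * Complex.exp (u z)) :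
    JoinedIn F x y ∨ JoinedIn F x w := by
  by_contra hcon
  push Not at hcon
  have hU := hF.pathComponentIn x
  have hfr : frontier (pathComponentIn F x) ⊆ closure F \ F := fun z hz =>
    ⟨closure_mono pathComponentIn_subset (frontier_subset_closure hz),
      frontier_pathComponentIn hF x hz⟩
  have hcl : ∀ y, y ∈ F → ¬ JoinedIn F x y → ∀ z ∈ closure (pathComponentIn F x), z - y ≠ 0 := by
    intro y hyF hy z hz h
    rw [sub_eq_zero] at h
    subst h
    have : z ∈ frontier (pathComponentIn F x) := by
      rw [hU.frontier_eq]; exact ⟨hz, hy⟩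
    exact (hfr this).2 hyF
  apply hs
  have h1 := hcl y hy hcon.1
  have h2 := hcl w hw hcon.2
  refine winding_zero hU (hb.subset pathComponentIn_subset) (mem_pathComponentIn_self hx)
    (fun z => (z - y) ^ m * (z - w) ^ n) u ?_ ?_ (hu.mono (hfr.trans hK)) s
    (fun z hz => he z (hK (hfr hz)))
  · refine ContinuousOn.mul ?_ ?_
    · exact ContinuousOn.zpow₀ (by fun_prop) _ (fun z hz => Or.inl (h1 z hz))
    · exact ContinuousOn.zpow₀ (by fun_prop) _ (fun z hz => Or.inl (h2 z hz))
  · intro z hz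
    exact mul_ne_zero (zpow_ne_zero _ (h1 z hz)) (zpow_ne_zero _ (h2 z hz))

lemma glue {K₁ K₂ : Set ℂ} (h1 : IsClosed K₁) (h2 : IsClosed K₂) (u₁ u₂ : ℂ → ℂ)
    (hu₁ : ContinuousOn u₁ K₁) (hu₂ : ContinuousOn u₂ K₂) (h : ∀ z ∈ K₁, z ∈ K₂ → u₁ z = u₂ z) :
    ∃ u : ℂ → ℂ, ContinuousOn u (K₁ ∪ K₂) ∧ (∀ z ∈ K₁, u z = u₁ z) ∧ (∀ z ∈ K₂, u z = u₂ z) := by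
  classical
  have e1 : ∀ z ∈ K₁, (if z ∈ K₁ then u₁ z else u₂ z) = u₁ z := fun z hz => if_pos hz
  have e2 : ∀ z ∈ K₂, (if z ∈ K₁ then u₁ z else u₂ z) = u₂ z := by
    intro z hz
    by_cases hz1 : z ∈ K₁
    · rw [if_pos hz1]; exact h z hz1 hz
    · exact if_neg hz1
  exact ⟨fun z => if z ∈ K₁ then u₁ z else u₂ z,
    (hu₁.congr e1).union_of_isClosed (hu₂.congr e2) h1 h2, e1, e2⟩

lemma three_points {q : ℂ} {r r' : ℝ} (hr : r' ≤ r) {a b : ℝ} (hab : a ≤ b) (σ : ℝ → ℂ)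
    (hσ : ContinuousOn σ (Icc a b)) (hi : InjOn σ (Icc a b)) (hσr : σ '' Icc a b ⊆ ball q r)
    {R : Set ℂ} (hR : IsClosed R) (hRq : Disjoint (ball q r') R)
    (ha : σ a ∈ R) (hb : σ b ∈ R) (hRσ : ∀ t ∈ Icc a b, σ t ∈ R → t = a ∨ t = b)
    {x y w : ℂ} (hx : x ∈ ball q r' \ (σ '' Icc a b ∪ R)) (hy : y ∈ ball q r' \ (σ '' Icc a b ∪ R))
    (hw : w ∈ ball q r' \ (σ '' Icc a b ∪ R)) :
    JoinedIn (ball q r \ (σ '' Icc a b ∪ R)) x y ∨ JoinedIn (ball q r \ (σ '' Icc a b ∪ R)) x w ∨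
    JoinedIn (ball q r \ (σ '' Icc a b ∪ R)) y w := by
  set A := σ '' Icc a b with hA
  have hAc : IsClosed A := (isCompact_Icc.image_of_continuousOn hσ).isClosed
  set S := R ∪ sphere q r with hSdef
  have hSc : IsClosed S := hR.union isClosed_sphere
  set F := ball q r \ (A ∪ R) with hFdef
  have hF : IsOpen F := isOpen_ball.sdiff (hAc.union hR)
  have hFb : Bornology.IsBounded F := isBounded_ball.subset sdiff_subset
  have hsub : ball q r' \ (A ∪ R) ⊆ F := sdiff_subset_sdiff_left (ball_subset_ball hr)
  have hFK : closure F \ F ⊆ A ∪ S := by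
    rintro z ⟨hz, hzF⟩
    have h1 : z ∈ closedBall q r := closure_ball_subset_closedBall (closure_mono sdiff_subset hz)
    by_cases h2 : z ∈ ball q r
    · by_cases h3 : z ∈ A ∪ R
      · exact h3.elim Or.inl (fun h => Or.inr (Or.inl h))
      · exact absurd ⟨h2, h3⟩ hzF
    · refine Or.inr (Or.inr ?_)
      rw [mem_closedBall] at h1; rw [mem_ball] at h2; rw [mem_sphere]
      exact le_antisymm h1 (not_lt.1 h2)
  have hdisj : Disjoint (ball q r') S := by
    rw [hSdef, disjoint_union_right]
    refine ⟨hRq, ?_⟩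
    exact (sphere_disjoint_ball.mono_right (ball_subset_ball hr)).symm
  have hAlog : ∀ x ∈ F, ∀ y ∈ F, ∃ u : ℂ → ℂ, ContinuousOn u A ∧
      ∀ z ∈ A, z - x = (z - y) * Complex.exp (u z) := by
    intro x hx y hy
    have hne : ∀ x ∈ F, ∀ z ∈ A, z - x ≠ 0 := by
      intro x hx z hz h
      rw [sub_eq_zero] at h; subst h
      exact hx.2 (Or.inl hz)
    obtain ⟨u, hu1, hu2⟩ := exists_log_arc hab σ hσ hi (fun z => (z - x) / (z - y))
      (ContinuousOn.div (by fun_prop) (by fun_prop) (hne y hy))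
      (fun z hz => div_ne_zero (hne x hx z hz) (hne y hy z hz))
    refine ⟨u, hu1, fun z hz => ?_⟩
    rw [hu2 z hz, mul_div_cancel₀ _ (hne y hy z hz)]
  obtain ⟨u₁, hu₁, hu₁'⟩ := hAlog x (hsub hx) y (hsub hy)
  obtain ⟨v₁, hv₁, hv₁'⟩ := hAlog w (hsub hw) y (hsub hy)
  obtain ⟨u₂, hu₂, hu₂'⟩ := log_outside q hdisj hx.1 hy.1
  obtain ⟨v₂, hv₂, hv₂'⟩ := log_outside q hdisj hw.1 hy.1
  have hyA : ∀ z ∈ A, z - y ≠ 0 := by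
    intro z hz h
    rw [sub_eq_zero] at h; subst h
    exact hy.2 (Or.inl hz)
  have hinter : ∀ z ∈ A, z ∈ S → (∃ n : ℤ, u₁ z = u₂ z + n * (2 * Real.pi * Complex.I)) ∧
      (∃ n : ℤ, v₁ z = v₂ z + n * (2 * Real.pi * Complex.I)) := by
    intro z hz hzS
    refine ⟨Complex.exp_eq_exp_iff_exists_int.1 ?_, Complex.exp_eq_exp_iff_exists_int.1 ?_⟩
    · exact mul_left_cancel₀ (hyA z hz) ((hu₁' z hz).symm.trans (hu₂' z hzS))
    · exact mul_left_cancel₀ (hyA z hz) ((hv₁' z hz).symm.trans (hv₂' z hzS))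
  have haA : σ a ∈ A := mem_image_of_mem _ (left_mem_Icc.2 hab)
  have hbA : σ b ∈ A := mem_image_of_mem _ (right_mem_Icc.2 hab)
  obtain ⟨⟨n1, hn1⟩, ⟨k1, hk1⟩⟩ := hinter _ haA (Or.inl ha)
  obtain ⟨⟨n2, hn2⟩, ⟨k2, hk2⟩⟩ := hinter _ hbA (Or.inl hb)
  have hAS : ∀ z ∈ A, z ∈ S → z = σ a ∨ z = σ b := by
    rintro z ⟨t, ht, rfl⟩ hzS
    rcases hzS with h | h
    · rcases hRσ t ht h with rfl | rfl
      · exact Or.inl rfl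
      · exact Or.inr rfl
    · exact absurd (hσr ⟨t, ht, rfl⟩) (fun h' => sphere_disjoint_ball.le_bot ⟨h, h'⟩)
  have comb : ∀ s t : ℤ, s * (n2 - n1) + t * (k2 - k1) = 0 →
      ∃ W : ℂ → ℂ, ContinuousOn W (A ∪ S) ∧
        ∀ z ∈ A ∪ S, (z - x) ^ s * (z - w) ^ t = (z - y) ^ s * (z - y) ^ t * Complex.exp (W z) := by
    intro s t hst
    obtain ⟨W, hW, hW1, hW2⟩ := glue hAc hSc (fun z => s * u₁ z + t * v₁ z)
      (fun z => s * u₂ z + t * v₂ z + ((s * n1 + t * k1 : ℤ) : ℂ) * (2 * Real.pi * Complex.I))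
      (by fun_prop) (by fun_prop) (by
        intro z hz hzS
        rcases hAS z hz hzS with rfl | rfl
        · rw [hn1, hk1]; push_cast; ring
        · rw [hn2, hk2]
          have : (s * (n2 - n1) + t * (k2 - k1) : ℂ) = 0 := by exact_mod_cast hst
          push_cast
          linear_combination (2 * Real.pi * Complex.I) * this)
    refine ⟨W, hW, ?_⟩
    rintro z (hz | hz)
    · rw [hW1 z hz, hu₁' z hz, hv₁' z hz, Complex.exp_add, Complex.exp_int_mul, Complex.exp_int_mul,
        mul_zpow, mul_zpow]
      ring
    · rw [hW2 z hz, hu₂' z hz, hv₂' z hz, Complex.exp_add, Complex.exp_add, Complex.exp_int_mul,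
        Complex.exp_int_mul, Complex.exp_int_mul_two_pi_mul_I, mul_zpow, mul_zpow]
      ring
  have hneS : ∀ p ∈ ball q r' \ (A ∪ R), ∀ z ∈ A ∪ S, z - p ≠ 0 := by
    intro p hp z hz h
    rw [sub_eq_zero] at h; subst h
    rcases hz with h | h
    · exact hp.2 (Or.inl h)
    · exact hdisj.le_bot ⟨hp.1, h⟩
  by_cases hl : k2 - k1 = 0
  · obtain ⟨W, hW, hW'⟩ := comb 0 1 (by rw [hl]; ring)
    rcases joined_of_log hF hFb hFK (hsub hw) (hsub hy) (hsub hy) W hW 1 1 0 one_ne_zero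
      (by intro z hz; simpa using hW' z hz) with h | h
    · exact Or.inr (Or.inr h.symm)
    · exact Or.inr (Or.inr h.symm)
  · obtain ⟨W, hW, hW'⟩ := comb (k2 - k1) (-(n2 - n1)) (by ring)
    rcases joined_of_log hF hFb hFK (hsub hx) (hsub hy) (hsub hw) W hW (k2 - k1)
      ((k2 - k1) + (-(n2 - n1))) (n2 - n1) hl
      (by
        intro z hz
        have h1 := hW' z hz
        have h2 : (z - w) ^ (-(n2 - n1)) * (z - w) ^ (n2 - n1) = 1 := by
          rw [← zpow_add₀ (hneS w hw z hz)]; simp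
        rw [zpow_add₀ (hneS y hy z hz)]
        linear_combination (z - w) ^ (n2 - n1) * h1 - (z - x) ^ (k2 - k1) * h2) with h | h
    · exact Or.inl h
    · exact Or.inr (Or.inl h)

lemma isPreconnected_ball_sdiff (q : ℂ) (δ : ℝ) : IsPreconnected (ball q δ \ {q}) := by
  have : ball q δ \ {q} = (fun p : ℝ × ℝ => q + p.1 * Complex.exp (p.2 * Complex.I)) ''
      (Ioo 0 δ ×ˢ univ) := by
    ext z
    constructor
    · rintro ⟨hz, hzq⟩
      refine ⟨(‖z - q‖, (z - q).arg), ⟨⟨norm_pos_iff.2 (sub_ne_zero.2 hzq), ?_⟩, trivial⟩, ?_⟩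
      · rwa [mem_ball, dist_eq_norm] at hz
      · dsimp only; rw [Complex.norm_mul_exp_arg_mul_I]; ring
    · rintro ⟨⟨ρ, θ⟩, ⟨⟨h1, h2⟩, -⟩, rfl⟩
      have hn : ‖(ρ : ℂ) * Complex.exp (θ * Complex.I)‖ = ρ := by
        rw [norm_mul, Complex.norm_exp_ofReal_mul_I, mul_one, Complex.norm_real, Real.norm_eq_abs,
          abs_of_pos h1]
      refine ⟨?_, ?_⟩
      · rw [mem_ball, dist_eq_norm, add_sub_cancel_left]; exact hn.trans_lt h2
      · simp only [mem_singleton_iff, add_eq_left]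
        rw [← norm_eq_zero, hn]; exact h1.ne'
  rw [this]
  exact ((convex_Ioo _ _).prod convex_univ).isPreconnected.image _ (by fun_prop)

structure ArcData (G : Set ℂ) (q : ℂ) (r ε : ℝ) (σ : ℝ → ℂ) (R : Set ℂ) : Prop where
  pos : 0 < ε
  cont : ContinuousOn σ (Icc (-ε) ε)
  inj : InjOn σ (Icc (-ε) ε)
  sub : σ '' Icc (-ε) ε ⊆ ball q r
  zero : σ 0 = q
  closed : IsClosed R
  notMem : q ∉ R
  left : σ (-ε) ∈ R
  right : σ ε ∈ R
  ends : ∀ t ∈ Icc (-ε) ε, σ t ∈ R → t = -ε ∨ t = ε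
  eq : G = σ '' Icc (-ε) ε ∪ R

lemma exists_arcData (f : (sphere (0 : ℂ) 1 : Set ℂ) → OnePoint ℂ) (hf : Continuous f)
    (hfi : Function.Injective f) (q : ℂ) (hq : (q : OnePoint ℂ) ∈ range f) {r : ℝ} (hr : 0 < r) :
    ∃ ε σ R, ArcData (((↑) : ℂ → OnePoint ℂ) ⁻¹' range f) q r ε σ R := by
  obtain ⟨e0, he0⟩ := hq
  have he0n : ‖(e0 : ℂ)‖ = 1 := by simp
  have he00 : (e0 : ℂ) ≠ 0 := by intro h; rw [h] at he0n; simp at he0n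
  let e : ℝ → (sphere (0 : ℂ) 1 : Set ℂ) := fun t => ⟨e0 * Complex.exp (t * Complex.I), by
    simp [he0n, Complex.norm_exp_ofReal_mul_I]⟩
  have hec : Continuous e := by
    apply Continuous.subtype_mk; fun_prop
  let φ : ℝ → OnePoint ℂ := fun t => f (e t)
  have hφ : Continuous φ := hf.comp hec
  have hφ0 : φ 0 = q := by
    rw [← he0]; simp [φ, e]
  have hφi : ∀ s ∈ Icc (-Real.pi) Real.pi, ∀ t ∈ Ioo (-Real.pi) Real.pi, φ s = φ t → s = t := by
    intro s hs t ht h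
    have h1 : e s = e t := hfi h
    have h2 : (e0 : ℂ) * Complex.exp (s * Complex.I) = e0 * Complex.exp (t * Complex.I) :=
      congrArg Subtype.val h1
    have h3 := mul_left_cancel₀ he00 h2
    obtain ⟨n, hn⟩ := Complex.exp_eq_exp_iff_exists_int.1 h3
    have h4 : s = t + n * (2 * Real.pi) := by
      have := congrArg Complex.im hn
      simpa using this
    have hpi := Real.pi_pos
    have hn0 : n = 0 := by
      have a1 : (n : ℝ) < 1 := by
        by_contra hc; push Not at hc
        nlinarith [hs.1, hs.2, ht.1, ht.2]
      have a2 : (-1 : ℝ) < n := by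
        by_contra hc; push Not at hc
        nlinarith [hs.1, hs.2, ht.1, ht.2]
      have a1' : n < 1 := by exact_mod_cast a1
      have a2' : -1 < n := by exact_mod_cast a2
      omega
    rw [h4, hn0]; simp
  have hφr : range f = φ '' Icc (-Real.pi) Real.pi := by
    apply Subset.antisymm
    · rintro _ ⟨z, rfl⟩
      refine ⟨Complex.arg (z / e0), ⟨(Complex.neg_pi_lt_arg _).le, Complex.arg_le_pi _⟩, ?_⟩
      have hz : ‖(z : ℂ)‖ = 1 := by simp
      have : e (Complex.arg (z / e0)) = z := by
        apply Subtype.ext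
        change (e0 : ℂ) * Complex.exp (Complex.arg (z / e0) * Complex.I) = z
        have h := Complex.norm_mul_exp_arg_mul_I ((z : ℂ) / e0)
        rw [norm_div, hz, he0n] at h
        simp only [div_one, Complex.ofReal_one, one_mul] at h
        rw [h, mul_div_cancel₀ _ he00]
      change f (e _) = f z
      rw [this]
    · rintro _ ⟨t, -, rfl⟩; exact mem_range_self _
  have hopen : IsOpen (φ ⁻¹' (((↑) : ℂ → OnePoint ℂ) '' ball q r)) :=
    (OnePoint.isOpenEmbedding_coe.isOpenMap _ isOpen_ball).preimage hφ
  have h0mem : (0 : ℝ) ∈ φ ⁻¹' (((↑) : ℂ → OnePoint ℂ) '' ball q r) := by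
    rw [mem_preimage, hφ0]; exact mem_image_of_mem _ (mem_ball_self hr)
  obtain ⟨η, hη, hηs⟩ := Metric.isOpen_iff.1 hopen 0 h0mem
  have hpi := Real.pi_pos
  obtain ⟨ε, hε0, hεη, hεpi⟩ : ∃ ε, 0 < ε ∧ ε < η ∧ ε < Real.pi := by
    refine ⟨min η Real.pi / 2, ?_, ?_, ?_⟩
    · have := lt_min hη hpi; linarith
    · have := lt_min hη hpi; have := min_le_left η Real.pi; linarith
    · have := lt_min hη hpi; have := min_le_right η Real.pi; linarith
  let σ : ℝ → ℂ := fun t => (φ t).elim 0 id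
  have hσ : ∀ t ∈ Icc (-ε) ε, σ t ∈ ball q r ∧ (σ t : OnePoint ℂ) = φ t := by
    intro t ht
    have : t ∈ ball (0 : ℝ) η := by
      rw [mem_ball, dist_zero_right, Real.norm_eq_abs]; exact (abs_le.2 ht).trans_lt hεη
    obtain ⟨z, hz, hz'⟩ := hηs this
    have : σ t = z := by simp only [σ, ← hz']; rfl
    rw [this]; exact ⟨hz, hz'⟩
  have hsubset : ∀ t ∈ Icc (-ε) ε, t ∈ Ioo (-Real.pi) Real.pi := fun t ht =>
    ⟨by linarith [ht.1], by linarith [ht.2]⟩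
  let T : Set ℝ := Icc (-Real.pi) (-ε) ∪ Icc ε Real.pi
  have hT : T ⊆ Icc (-Real.pi) Real.pi := by
    rintro t (h | h)
    · exact ⟨h.1, by linarith [h.2]⟩
    · exact ⟨by linarith [h.1], h.2⟩
  have hTu : Icc (-ε) ε ∪ T = Icc (-Real.pi) Real.pi := by
    apply Subset.antisymm
    · exact union_subset (fun t ht => Ioo_subset_Icc_self (hsubset t ht)) hT
    · intro t ht
      by_cases h1 : t ≤ -ε
      · exact Or.inr (Or.inl ⟨ht.1, h1⟩)
      · by_cases h2 : ε ≤ t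
        · exact Or.inr (Or.inr ⟨h2, ht.2⟩)
        · exact Or.inl ⟨(not_le.1 h1).le, (not_le.1 h2).le⟩
  refine ⟨ε, σ, ((↑) : ℂ → OnePoint ℂ) ⁻¹' (φ '' T), hε0, ?_, ?_, ?_, ?_, ?_, ?_, ?_, ?_, ?_, ?_⟩
  · rw [OnePoint.isOpenEmbedding_coe.isInducing.continuousOn_iff]
    exact hφ.continuousOn.congr (fun t ht => (hσ t ht).2)
  · intro s hs t ht h
    apply hφi s (Ioo_subset_Icc_self (hsubset s hs)) t (hsubset t ht)
    rw [← (hσ s hs).2, ← (hσ t ht).2, h]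
  · rintro _ ⟨t, ht, rfl⟩; exact (hσ t ht).1
  · have := (hσ 0 ⟨by linarith, hε0.le⟩).2
    rw [hφ0] at this
    exact OnePoint.coe_injective this
  · have : IsCompact T := isCompact_Icc.union isCompact_Icc
    exact (this.image hφ).isClosed.preimage OnePoint.continuous_coe
  · rintro ⟨t, ht, h⟩
    have := hφi t (hT ht) 0 ⟨by linarith, hpi⟩ (h.trans hφ0.symm)
    subst this
    rcases ht with h | h
    · linarith [h.2]
    · linarith [h.1]
  · exact ⟨-ε, Or.inl ⟨by linarith, le_rfl⟩, ((hσ _ ⟨le_rfl, by linarith⟩).2).symm⟩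
  · exact ⟨ε, Or.inr ⟨le_rfl, hεpi.le⟩, ((hσ _ ⟨by linarith, le_rfl⟩).2).symm⟩
  · rintro t ht ⟨s, hs, h⟩
    rw [(hσ t ht).2] at h
    have := hφi s (hT hs) t (hsubset t ht) h
    subst this
    rcases hs with h | h
    · left; exact le_antisymm h.2 ht.1
    · right; exact le_antisymm ht.2 h.1
  · ext z
    rw [mem_preimage, hφr, ← hTu, image_union, mem_union, mem_union]
    refine or_congr ?_ Iff.rfl
    constructor
    · rintro ⟨t, ht, h⟩
      refine ⟨t, ht, OnePoint.coe_injective ?_⟩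
      rw [(hσ t ht).2, h]
    · rintro ⟨t, ht, rfl⟩
      exact ⟨t, ht, (hσ t ht).2.symm⟩

lemma ArcData.dense {G : Set ℂ} {q : ℂ} {r ε : ℝ} {σ : ℝ → ℂ} {R : Set ℂ}
    (h : ArcData G q r ε σ R) : q ∈ closure Gᶜ := by
  rw [Metric.mem_closure_iff]
  intro δ hδ
  by_contra hcon
  push Not at hcon
  obtain ⟨η, hη, hηs⟩ := Metric.isOpen_iff.1 h.closed.isOpen_compl q h.notMem
  set d := min δ η
  have hd : 0 < d := lt_min hδ hη
  have hsub : ball q d ⊆ σ '' Icc (-ε) ε := by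
    intro z hz
    have h1 : z ∈ G := by
      by_contra hzG
      have := hcon z hzG
      rw [mem_ball, dist_comm] at hz
      exact absurd (hz.trans_le (min_le_left _ _)) (not_lt.2 this)
    rw [h.eq] at h1
    exact h1.resolve_right (hηs (ball_subset_ball (min_le_right _ _) hz))
  let φ : Icc (-ε) ε → ℂ := fun t => σ t
  have hφ : IsClosedEmbedding φ := by
    apply Continuous.isClosedEmbedding
    · exact h.cont.domRestrict
    · intro x y hxy; exact Subtype.ext (h.inj x.2 y.2 hxy)
  have hs : φ '' (φ ⁻¹' (ball q d \ {q})) = ball q d \ {q} := by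
    rw [image_preimage_eq_iff]
    intro z hz
    obtain ⟨t, ht, rfl⟩ := hsub hz.1
    exact ⟨⟨t, ht⟩, rfl⟩
  have hp : IsPreconnected (φ ⁻¹' (ball q d \ {q})) := by
    rw [← hφ.isInducing.isPreconnected_image, hs]
    exact isPreconnected_ball_sdiff q d
  have hpos := h.pos
  have h0 : (0 : ℝ) ∈ Icc (-ε) ε := ⟨by linarith, by linarith⟩
  have hφ0 : φ ⟨0, h0⟩ = q := h.zero
  have hopen : IsOpen (φ ⁻¹' ball q d) := isOpen_ball.preimage hφ.continuous
  obtain ⟨η', hη', hs'⟩ := Metric.isOpen_iff.1 hopen ⟨0, h0⟩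
    (by rw [mem_preimage, hφ0]; exact mem_ball_self hd)
  obtain ⟨c, hc0, hcη, hcε⟩ : ∃ c, 0 < c ∧ c < η' ∧ c < ε := by
    obtain ⟨c, h1, h2⟩ := exists_between (lt_min hη' hpos)
    exact ⟨c, h1, h2.trans_le (min_le_left _ _), h2.trans_le (min_le_right _ _)⟩
  have hmem : ∀ t (ht : t ∈ Icc (-ε) ε), |t| < η' → t ≠ 0 →
      (⟨t, ht⟩ : Icc (-ε) ε) ∈ φ ⁻¹' (ball q d \ {q}) := by
    intro t ht h1 h2
    refine ⟨hs' ?_, ?_⟩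
    · rw [mem_ball, Subtype.dist_eq, dist_zero_right]; exact h1
    · intro h3
      have h3 : φ ⟨t, ht⟩ = q := h3
      exact h2 (congrArg Subtype.val (hφ.injective (h3.trans hφ0.symm)))
  have hp2 := (hp.image _ continuous_subtype_val.continuousOn).ordConnected
  have h1 : (-c) ∈ Subtype.val '' (φ ⁻¹' (ball q d \ {q})) :=
    ⟨_, hmem (-c) ⟨by linarith, by linarith⟩ (by rwa [abs_neg, abs_of_pos hc0]) (by linarith), rfl⟩
  have h2 : c ∈ Subtype.val '' (φ ⁻¹' (ball q d \ {q})) :=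
    ⟨_, hmem c ⟨by linarith, by linarith⟩ (by rwa [abs_of_pos hc0]) (by linarith), rfl⟩
  obtain ⟨t, ht, ht0⟩ := hp2.out h1 h2 (⟨by linarith, by linarith⟩ : (0 : ℝ) ∈ Icc (-c) c)
  have : t = ⟨0, h0⟩ := Subtype.ext ht0
  subst this
  exact ht.2 hφ0

/-- Locally at `p`, the complement of `Γ` has only finitely many components. -/
def LocFin {X : Type*} [TopologicalSpace X] (Γ : Set X) (p : X) : Prop :=
  ∀ V : Set X, IsOpen V → p ∈ V → ∃ W : Set X, IsOpen W ∧ p ∈ W ∧ W ⊆ V ∧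
    ∃ B : Set X, B.Finite ∧ ∀ x ∈ W \ Γ, ∃ b ∈ B, JoinedIn (V \ Γ) b x

lemma finite_of_three {X : Type*} (S : Set X) (r : X → X → Prop)
    (h : ∀ x ∈ S, ∀ y ∈ S, ∀ w ∈ S, r x y ∨ r x w ∨ r y w) :
    ∃ B : Set X, B.Finite ∧ ∀ x ∈ S, ∃ b ∈ B, r b x := by
  by_cases h1 : S.Nonempty
  · obtain ⟨x, hx⟩ := h1
    by_cases h2 : ∀ y ∈ S, r x y
    · exact ⟨{x}, finite_singleton x, fun y hy => ⟨x, rfl, h2 y hy⟩⟩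
    · push Not at h2
      obtain ⟨y, hy, hxy⟩ := h2
      refine ⟨{x, y}, by simp, fun w hw => ?_⟩
      rcases h x hx y hy w hw with h | h | h
      · exact absurd h hxy
      · exact ⟨x, by simp, h⟩
      · exact ⟨y, by simp, h⟩
  · exact ⟨∅, finite_empty, fun x hx => absurd ⟨x, hx⟩ h1⟩

lemma curve_local_coe (f : (sphere (0 : ℂ) 1 : Set ℂ) → OnePoint ℂ) (hf : Continuous f)
    (hfi : Function.Injective f) (q : ℂ) (hq : (q : OnePoint ℂ) ∈ range f) :
    LocFin (range f) (q : OnePoint ℂ) ∧ (q : OnePoint ℂ) ∈ closure (range f)ᶜ := by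
  constructor
  · intro V hV hqV
    obtain ⟨r, hr, hrV⟩ := Metric.isOpen_iff.1 (hV.preimage OnePoint.continuous_coe) q hqV
    obtain ⟨ε, σ, R, h⟩ := exists_arcData f hf hfi q hq hr
    obtain ⟨η, hη, hηs⟩ := Metric.isOpen_iff.1 h.closed.isOpen_compl q h.notMem
    set r' := min r η
    have hr' : 0 < r' := lt_min hr hη
    have hpos := h.pos
    obtain ⟨B, hB, hB'⟩ := finite_of_three (ball q r' \ (σ '' Icc (-ε) ε ∪ R))
      (JoinedIn (ball q r \ (σ '' Icc (-ε) ε ∪ R)))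
      (fun x hx y hy w hw => three_points (min_le_left _ _) (by linarith) σ h.cont h.inj h.sub
        h.closed (disjoint_left.2 fun z hz => hηs (ball_subset_ball (min_le_right _ _) hz))
        h.left h.right h.ends hx hy hw)
    rw [← h.eq] at hB'
    refine ⟨((↑) : ℂ → OnePoint ℂ) '' ball q r', OnePoint.isOpenMap_coe _ isOpen_ball,
      mem_image_of_mem _ (mem_ball_self hr'), ?_, ((↑) : ℂ → OnePoint ℂ) '' B, hB.image _, ?_⟩
    · rintro _ ⟨z, hz, rfl⟩
      exact hrV (ball_subset_ball (min_le_left _ _) hz)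
    · rintro _ ⟨⟨z, hz, rfl⟩, hzf⟩
      obtain ⟨b, hb, hj⟩ := hB' z ⟨hz, hzf⟩
      refine ⟨b, mem_image_of_mem _ hb, (hj.map OnePoint.continuous_coe).mono ?_⟩
      rintro _ ⟨w, hw, rfl⟩
      exact ⟨hrV hw.1, hw.2⟩
  · obtain ⟨ε, σ, R, h⟩ := exists_arcData f hf hfi q hq one_pos
    have := h.dense
    rw [← preimage_compl] at this
    exact OnePoint.continuous_coe.closure_preimage_subset _ this

lemma sphere_homeo : Nonempty (OnePoint ℂ ≃ₜ sphere (0 : EuclideanSpace ℝ (Fin 3)) 1) :=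
  ⟨onePointEquivSphereOfFinrankEq (by simp [Complex.finrank_real_complex])⟩

lemma locPath_onePoint : LocallyPathConnectedSpace (OnePoint ℂ) := by
  obtain ⟨e⟩ := sphere_homeo
  have : Fact (Module.finrank ℝ (EuclideanSpace ℝ (Fin 3)) = 2 + 1) := ⟨by simp⟩
  have : LocallyPathConnectedSpace (sphere (0 : EuclideanSpace ℝ (Fin 3)) 1) :=
    ChartedSpace.locallyPathConnectedSpace (EuclideanSpace ℝ (Fin 2)) _
  exact e.isOpenEmbedding.locallyPathConnectedSpace

lemma metrizable_onePoint : TopologicalSpace.MetrizableSpace (OnePoint ℂ) := by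
  obtain ⟨e⟩ := sphere_homeo
  exact e.isEmbedding.metrizableSpace

lemma exists_homeo_infty : ∃ h : OnePoint ℂ ≃ₜ OnePoint ℂ, ∃ q : ℂ, h OnePoint.infty = q := by
  obtain ⟨e⟩ := sphere_homeo
  let h := (e.trans (Homeomorph.neg (sphere (0 : EuclideanSpace ℝ (Fin 3)) 1))).trans e.symm
  have : h OnePoint.infty ≠ OnePoint.infty := by
    intro hh
    have h1 : e.symm (- e OnePoint.infty) = OnePoint.infty := hh
    rw [Homeomorph.symm_apply_eq] at h1
    have h2 := congrArg Subtype.val h1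
    have h3 : ‖(e OnePoint.infty : EuclideanSpace ℝ (Fin 3))‖ = 1 := by simp
    have h4 : -(e OnePoint.infty : EuclideanSpace ℝ (Fin 3)) = e OnePoint.infty := h2
    have h5 : (2 : ℝ) • (e OnePoint.infty : EuclideanSpace ℝ (Fin 3)) = 0 := by
      rw [two_smul]; nth_rw 1 [← h4]; simp
    rw [smul_eq_zero] at h5
    rcases h5 with h5 | h5
    · norm_num at h5
    · rw [h5] at h3; simp at h3
  obtain ⟨q, hq⟩ := OnePoint.ne_infty_iff_exists.1 this
  exact ⟨h, q, hq.symm⟩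

lemma LocFin.of_homeo {X : Type*} [TopologicalSpace X] (h : X ≃ₜ X) {Γ : Set X} {p : X}
    (H : LocFin (h '' Γ) (h p)) : LocFin Γ p := by
  intro V hV hp
  obtain ⟨W, hW, hpW, hWV, B, hB, hB'⟩ := H (h '' V) (h.isOpenMap _ hV) (mem_image_of_mem _ hp)
  refine ⟨h ⁻¹' W, hW.preimage h.continuous, hpW, ?_, h.symm '' B, hB.image _, ?_⟩
  · intro x hx
    obtain ⟨y, hy, hxy⟩ := hWV hx
    exact h.injective hxy ▸ hy
  · rintro x ⟨hx, hxΓ⟩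
    obtain ⟨b, hb, hj⟩ := hB' (h x) ⟨hx, fun hc => hxΓ (by
      obtain ⟨y, hy, hxy⟩ := hc
      exact h.injective hxy ▸ hy)⟩
    refine ⟨h.symm b, mem_image_of_mem _ hb, ?_⟩
    have := hj.map h.symm.continuous
    rw [h.symm_apply_apply] at this
    refine this.mono ?_
    rintro _ ⟨_, ⟨⟨y, hy, rfl⟩, hy2⟩, rfl⟩
    rw [h.symm_apply_apply]
    exact ⟨hy, fun hc => hy2 (mem_image_of_mem _ hc)⟩

lemma curve_local (f : (sphere (0 : ℂ) 1 : Set ℂ) → OnePoint ℂ) (hf : Continuous f)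
    (hfi : Function.Injective f) (p : OnePoint ℂ) (hp : p ∈ range f) :
    LocFin (range f) p ∧ p ∈ closure (range f)ᶜ := by
  induction p using OnePoint.rec with
  | coe q => exact curve_local_coe f hf hfi q hp
  | infty =>
    obtain ⟨h, q, hq⟩ := exists_homeo_infty
    have hr : range (h ∘ f) = h '' range f := range_comp _ _
    have := curve_local_coe (h ∘ f) (h.continuous.comp hf) (h.injective.comp hfi) q
      (by rw [hr, ← hq]; exact mem_image_of_mem _ hp)
    rw [hr, ← hq] at this
    refine ⟨this.1.of_homeo h, ?_⟩
    have h2 := this.2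
    rw [← image_compl_eq h.bijective, ← h.image_closure] at h2
    obtain ⟨y, hy, hxy⟩ := h2
    exact h.injective hxy ▸ hy

lemma union_local {k : ℕ} (C : Fin k → Set (OnePoint ℂ))
    (hC : ∀ i, ∃ f : (sphere (0 : ℂ) 1 : Set ℂ) → OnePoint ℂ,
      Continuous f ∧ Function.Injective f ∧ range f = C i)
    (hd : Pairwise fun i i' => Disjoint (C i) (C i')) (p : OnePoint ℂ) :
    IsClosed (⋃ i, C i) ∧ LocFin (⋃ i, C i) p ∧ p ∈ closure (⋃ i, C i)ᶜ := by
  have := locPath_onePoint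
  have hcl : ∀ i, IsClosed (C i) := by
    intro i
    obtain ⟨f, hf, -, hr⟩ := hC i
    rw [← hr]
    exact (isCompact_range hf).isClosed
  have hclU : IsClosed (⋃ i, C i) := isClosed_iUnion_of_finite hcl
  refine ⟨hclU, ?_⟩
  by_cases hp : p ∈ ⋃ i, C i
  · obtain ⟨i, hi⟩ := mem_iUnion.1 hp
    obtain ⟨f, hf, hfi, hr⟩ := hC i
    obtain ⟨h1, h2⟩ := curve_local f hf hfi p (hr ▸ hi)
    rw [hr] at h1 h2
    let O : Set (OnePoint ℂ) := (⋃ j : {j // j ≠ i}, C j)ᶜ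
    have hO : IsOpen O := (isClosed_iUnion_of_finite (fun j : {j // j ≠ i} => hcl j)).isOpen_compl
    have hpO : p ∈ O := by
      intro hc
      obtain ⟨j, hj⟩ := mem_iUnion.1 hc
      exact (hd j.2).le_bot ⟨hj, hi⟩
    have hOC : ∀ x ∈ O, x ∉ C i → x ∉ ⋃ i, C i := by
      intro x hx hxi hc
      obtain ⟨j, hj⟩ := mem_iUnion.1 hc
      by_cases hji : j = i
      · exact hxi (hji ▸ hj)
      · exact hx (mem_iUnion.2 ⟨⟨j, hji⟩, hj⟩)
    constructor
    · intro V hV hpV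
      obtain ⟨W, hW, hpW, hWV, B, hB, hB'⟩ := h1 (V ∩ O) (hV.inter hO) ⟨hpV, hpO⟩
      refine ⟨W, hW, hpW, hWV.trans inter_subset_left, B, hB, ?_⟩
      rintro x ⟨hx, hx2⟩
      obtain ⟨b, hb, hj⟩ := hB' x ⟨hx, fun hc => hx2 (mem_iUnion.2 ⟨i, hc⟩)⟩
      exact ⟨b, hb, hj.mono fun y hy => ⟨hy.1.1, hOC y hy.1.2 hy.2⟩⟩
    · rw [_root_.mem_closure_iff] at h2 ⊢
      intro V hV hpV
      obtain ⟨x, hx, hx2⟩ := h2 (V ∩ O) (hV.inter hO) ⟨hpV, hpO⟩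
      exact ⟨x, hx.1, hOC x hx.2 hx2⟩
  · refine ⟨?_, subset_closure hp⟩
    intro V hV hpV
    have hop : IsOpen (V \ ⋃ i, C i) := hV.sdiff hclU
    refine ⟨pathComponentIn (V \ ⋃ i, C i) p, hop.pathComponentIn p,
      mem_pathComponentIn_self ⟨hpV, hp⟩, pathComponentIn_subset.trans sdiff_subset, {p},
      finite_singleton p, ?_⟩
    rintro x ⟨hx, -⟩
    exact ⟨p, rfl, hx⟩

lemma exists_reparam {X : Type*} [MetricSpace X] (F : ℝ → X) (hF : Continuous F)
    (hfib : ∀ a b t : ℝ, 0 ≤ a → a ≤ t → t ≤ b → b ≤ 1 → F a = F b → F t = F a)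
    (hne : F 0 ≠ F 1) :
    ∃ g : ℝ → X, ContinuousOn g (Icc 0 1) ∧ InjOn g (Icc 0 1) ∧ g '' Icc 0 1 ⊆ F '' Icc 0 1 ∧
      g 0 = F 0 ∧ g 1 = F 1 := by
  let v : ℝ → ℝ → ℝ := fun r t =>
    sSup ((fun l => dist (F (r + l * (max r t - r))) (F r)) '' Icc (0 : ℝ) 1)
  have hvc : ∀ r, Continuous (v r) := by
    intro r
    apply isCompact_Icc.continuous_sSup
    fun_prop
  have himg : ∀ r t, (fun l => dist (F (r + l * (max r t - r))) (F r)) '' Icc (0 : ℝ) 1 =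
      (fun s => dist (F s) (F r)) '' Icc r (max r t) := by
    intro r t
    have : Icc r (max r t) = (fun l => r + l * (max r t - r)) '' Icc (0 : ℝ) 1 := by
      have h := segment_eq_image' ℝ r (max r t)
      rw [segment_eq_Icc (le_max_left r t)] at h
      rw [h]; simp only [smul_eq_mul]
    rw [this, image_image]
  have hbdd : ∀ r t, BddAbove ((fun s => dist (F s) (F r)) '' Icc r (max r t)) := fun r t =>
    (isCompact_Icc.image (by fun_prop)).bddAbove
  have hv : ∀ r t, v r t = sSup ((fun s => dist (F s) (F r)) '' Icc r (max r t)) := fun r t =>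
    congrArg sSup (himg r t)
  have hvne : ∀ r t, ((fun s => dist (F s) (F r)) '' Icc r (max r t)).Nonempty := fun r t =>
    (nonempty_Icc.2 (le_max_left r t)).image _
  have hvmono : ∀ r, Monotone (v r) := by
    intro r s t hst
    rw [hv, hv]
    exact csSup_le_csSup (hbdd r t) (hvne r s)
      (image_mono (Icc_subset_Icc_right (max_le_max_left r hst)))
  have hv0 : ∀ r t, t ≤ r → v r t = 0 := by
    intro r t h
    rw [hv, max_eq_left h]; simp
  have hvnn : ∀ r t, 0 ≤ v r t := by
    intro r t
    rw [← hv0 r (min r t) (min_le_left _ _)]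
    exact hvmono r (min_le_right _ _)
  have hvle : ∀ r t, r ≤ t → dist (F t) (F r) ≤ v r t := by
    intro r t h
    rw [hv]
    exact le_csSup (hbdd r t) ⟨t, ⟨h, le_max_right _ _⟩, rfl⟩
  have hvconst : ∀ r a b, 0 ≤ a → a ≤ b → b ≤ 1 → F a = F b → v r b ≤ v r a := by
    intro r a b ha hab hb hFab
    rcases le_or_gt r a with hra | hra
    · rw [hv r b]
      refine csSup_le (hvne r b) ?_
      rintro _ ⟨s, ⟨hs1, hs2⟩, rfl⟩
      rw [max_eq_right (hra.trans hab)] at hs2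
      rcases le_or_gt s a with hsa | hsa
      · exact (hvle r s hs1).trans (hvmono r hsa)
      · dsimp only
        rw [hfib a b s ha hsa.le hs2 hb hFab]
        exact hvle r a hra
    · rcases le_or_gt r b with hrb | hrb
      · rw [hv r b]
        refine csSup_le (hvne r b) ?_
        rintro _ ⟨s, ⟨hs1, hs2⟩, rfl⟩
        rw [max_eq_right hrb] at hs2
        dsimp only
        rw [hfib a b s ha (hra.le.trans hs1) hs2 hb hFab, hfib a b r ha hra.le hrb hb hFab, dist_self]
        exact hvnn r a
      · rw [hv0 r b hrb.le]; exact hvnn r a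
  let d : ℕ → ℝ := TopologicalSpace.denseSeq ℝ
  let c : ℕ → ℝ → ℝ := fun n t => (1 / 2 : ℝ) ^ n * min (v (d n) t) 1
  have hc0 : ∀ n t, 0 ≤ c n t := fun n t =>
    mul_nonneg (by positivity) (le_min (hvnn _ _) zero_le_one)
  have hc1 : ∀ n t, c n t ≤ (1 / 2 : ℝ) ^ n := fun n t =>
    mul_le_of_le_one_right (by positivity) (min_le_right _ _)
  have hcm : ∀ n, Monotone (c n) := fun n s t hst =>
    mul_le_mul_of_nonneg_left (min_le_min_right 1 (hvmono _ hst)) (by positivity)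
  have hcs : ∀ t, Summable fun n => c n t := fun t =>
    Summable.of_nonneg_of_le (fun n => hc0 n t) (fun n => hc1 n t) summable_geometric_two
  let h : ℝ → ℝ := fun t => ∑' n, c n t
  have hh : Continuous h := by
    refine continuous_tsum (u := fun n => (1 / 2 : ℝ) ^ n) ?_ summable_geometric_two ?_
    · intro n
      exact continuous_const.mul ((hvc _).min continuous_const)
    · intro n t
      rw [Real.norm_eq_abs, abs_of_nonneg (hc0 n t)]; exact hc1 n t
  have hmono : Monotone h := fun s t hst =>
    (hcs s).tsum_le_tsum (fun n => hcm n hst) (hcs t)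
  have hlt : ∀ a b, a < b → F a ≠ F b → h a < h b := by
    intro a b hab hne
    have hop : IsOpen {x | F x ≠ F b} := isOpen_ne_fun hF continuous_const
    obtain ⟨δ, hδ, hδs⟩ := Metric.isOpen_iff.1 hop a hne
    obtain ⟨n, hn⟩ := (TopologicalSpace.denseRange_denseSeq ℝ).exists_mem_open
      (isOpen_Ioo (a := a) (b := min b (a + δ))) (nonempty_Ioo.2 (lt_min hab (by linarith)))
    have h1 : a < d n := hn.1
    have h2 : d n < b := hn.2.trans_le (min_le_left _ _)
    have h3 : F (d n) ≠ F b := by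
      apply hδs
      have := hn.2.trans_le (min_le_right _ _)
      have h4 : d n < a + δ := this
      rw [mem_ball, Real.dist_eq, abs_of_pos (by linarith)]; linarith
    refine (hcs a).tsum_lt_tsum (i := n) (fun n => hcm n hab.le) ?_ (hcs b)
    have e1 : c n a = 0 := by simp only [c]; rw [hv0 _ _ h1.le]; simp
    rw [e1]
    have : 0 < v (d n) b := (dist_pos.2 h3.symm).trans_le (hvle _ _ h2.le)
    exact mul_pos (by positivity) (lt_min this one_pos)
  have heq : ∀ a b, 0 ≤ a → a ≤ b → b ≤ 1 → F a = F b → h a = h b := by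
    intro a b ha hab hb hFab
    refine le_antisymm (hmono hab) ((hcs b).tsum_le_tsum (fun n => ?_) (hcs a))
    exact mul_le_mul_of_nonneg_left (min_le_min_right 1 (hvconst _ a b ha hab hb hFab)) (by positivity)
  have hinj : ∀ a ∈ Icc (0 : ℝ) 1, ∀ b ∈ Icc (0 : ℝ) 1, (h a = h b ↔ F a = F b) := by
    intro a ha b hb
    rcases lt_trichotomy a b with hab | hab | hab
    · refine ⟨fun e => ?_, heq a b ha.1 hab.le hb.2⟩
      by_contra hc; exact (hlt a b hab hc).ne e
    · subst hab; simp
    · refine ⟨fun e => ?_, fun e => (heq b a hb.1 hab.le ha.2 e.symm).symm⟩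
      by_contra hc; exact (hlt b a hab (fun e => hc e.symm)).ne e.symm
  have h01 : h 0 < h 1 := hlt 0 1 one_pos hne
  have hD : 0 < h 1 - h 0 := sub_pos.2 h01
  let H : Icc (0 : ℝ) 1 → Icc (0 : ℝ) 1 := fun t => ⟨(h t - h 0) / (h 1 - h 0),
    div_nonneg (sub_nonneg.2 (hmono t.2.1)) hD.le,
    (div_le_one hD).2 (sub_le_sub_right (hmono t.2.2) _)⟩
  have hHc : Continuous H := by
    apply Continuous.subtype_mk
    exact ((hh.comp continuous_subtype_val).sub continuous_const).div_const _
  have hHs : Function.Surjective H := by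
    intro y
    have : h 0 + y * (h 1 - h 0) ∈ Icc (h 0) (h 1) := by
      constructor <;> nlinarith [y.2.1, y.2.2]
    obtain ⟨t, ht, hty⟩ := intermediate_value_Icc zero_le_one hh.continuousOn this
    refine ⟨⟨t, ht⟩, Subtype.ext ?_⟩
    simp only [H]
    rw [hty]; field_simp; ring
  have hHq : IsQuotientMap H := IsQuotientMap.of_surjective_continuous hHs hHc
  have hHe : ∀ a b, H a = H b ↔ F a = F b := by
    intro a b
    rw [← hinj a a.2 b b.2]
    constructor
    · intro e
      have := congrArg Subtype.val e
      simp only [H] at this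
      rw [div_left_inj' hD.ne'] at this
      linarith
    · intro e; apply Subtype.ext; simp only [H]; rw [e]
  let k : Icc (0 : ℝ) 1 → Icc (0 : ℝ) 1 := Function.surjInv hHs
  have hk : ∀ y, H (k y) = y := Function.surjInv_eq hHs
  let G : Icc (0 : ℝ) 1 → X := fun y => F (k y)
  have hGH : ∀ t, G (H t) = F t := fun t => (hHe _ _).1 (hk (H t))
  have hGc : Continuous G := by
    rw [hHq.continuous_iff]
    have : G ∘ H = fun t : Icc (0 : ℝ) 1 => F t := funext hGH
    rw [this]; exact hF.comp continuous_subtype_val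
  have hGi : Function.Injective G := by
    intro x y hxy
    have := (hHe _ _).2 hxy
    rwa [hk, hk] at this
  refine ⟨fun t => G (projIcc 0 1 zero_le_one t), ?_, ?_, ?_, ?_, ?_⟩
  · exact (hGc.comp continuous_projIcc).continuousOn
  · intro s hs t ht hst
    have := hGi hst
    rw [projIcc_of_mem _ hs, projIcc_of_mem _ ht] at this
    exact congrArg Subtype.val this
  · rintro _ ⟨t, ht, rfl⟩
    exact ⟨_, (k (projIcc 0 1 zero_le_one t)).2, rfl⟩
  · have : projIcc (0 : ℝ) 1 zero_le_one 0 = H ⟨0, by simp⟩ := by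
      apply Subtype.ext; simp [H]
    dsimp only; rw [this, hGH]
  · have : projIcc (0 : ℝ) 1 zero_le_one 1 = H ⟨1, by simp⟩ := by
      apply Subtype.ext; simp [H, hD.ne']
    dsimp only; rw [this, hGH]

lemma exists_minimal_closed {X : Type*} [MetricSpace X] (f : ℝ → X) (hf : Continuous f) :
    ∃ K : Set ℝ, IsClosed K ∧ Iic 0 ∪ Ici 1 ⊆ K ∧
      (∀ a ∈ K, ∀ b ∈ K, a < b → Ioo a b ∩ K = ∅ → f a = f b) ∧
      (∀ a ∈ K, ∀ b ∈ K, 0 ≤ a → a < b → b ≤ 1 → f a = f b → Ioo a b ∩ K = ∅) := by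
  let S : Set (Set ℝ) := {K | IsClosed K ∧ Iic 0 ∪ Ici 1 ⊆ K ∧
      (∀ a ∈ K, ∀ b ∈ K, a < b → Ioo a b ∩ K = ∅ → f a = f b)}
  obtain ⟨K, hK⟩ := zorn_superset S (by
    intro c hcS hc
    rcases c.eq_empty_or_nonempty with rfl | hne
    · refine ⟨univ, ⟨isClosed_univ, subset_univ _, ?_⟩, by simp⟩
      intro a _ b _ hab h
      rw [inter_univ] at h
      exact absurd h (nonempty_Ioo.2 hab).ne_empty
    refine ⟨⋂₀ c, ⟨isClosed_sInter fun t ht => (hcS ht).1,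
      subset_sInter fun t ht => (hcS ht).2.1, ?_⟩, fun s hs => sInter_subset_of_mem hs⟩
    intro a ha b hb hab hgap
    have key : ∀ s t, a < s → s < t → t < b → ∃ a' ∈ Icc a s, ∃ b' ∈ Icc t b, f a' = f b' := by
      intro s t has hst htb
      have hNE : Nonempty c := hne.to_subtype
      obtain ⟨⟨K, hKc⟩, hKe⟩ := (isCompact_Icc (a := s) (b := t)).elim_directed_family_closed
        (fun k : c => (k : Set ℝ)) (fun k => (hcS k.2).1) (by
          rw [← sInter_eq_iInter]
          rw [eq_empty_iff_forall_notMem] at hgap ⊢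
          intro x hx
          exact hgap x ⟨⟨has.trans_le hx.1.1, hx.1.2.trans_lt htb⟩, hx.2⟩)
        (by
          intro x y
          rcases hc.total x.2 y.2 with h | h
          · exact ⟨x, subset_rfl, h⟩
          · exact ⟨y, h, subset_rfl⟩)
      dsimp only at hKe
      rw [eq_empty_iff_forall_notMem] at hKe
      obtain ⟨hcl, -, hg⟩ := hcS hKc
      have haK : a ∈ K := ha K hKc
      have hbK : b ∈ K := hb K hKc
      have h1 : IsGreatest (K ∩ Iic s) (sSup (K ∩ Iic s)) :=
        (hcl.inter isClosed_Iic).isGreatest_csSup ⟨a, haK, has.le⟩ ⟨s, fun x hx => hx.2⟩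
      have h2 : IsLeast (K ∩ Ici t) (sInf (K ∩ Ici t)) :=
        (hcl.inter isClosed_Ici).isLeast_csInf ⟨b, hbK, htb.le⟩ ⟨t, fun x hx => hx.2⟩
      generalize sSup (K ∩ Iic s) = a' at h1
      generalize sInf (K ∩ Ici t) = b' at h2
      have ha's : a' ≤ s := h1.1.2
      have hb't : t ≤ b' := h2.1.2
      refine ⟨a', ⟨h1.2 ⟨haK, has.le⟩, ha's⟩, b', ⟨hb't, h2.2 ⟨hbK, htb.le⟩⟩, ?_⟩
      apply hg a' h1.1.1 b' h2.1.1 (by linarith)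
      rw [eq_empty_iff_forall_notMem]
      rintro x ⟨⟨hx1, hx2⟩, hxK⟩
      by_cases hs : x ≤ s
      · exact absurd (h1.2 ⟨hxK, hs⟩) (not_le.2 hx1)
      by_cases ht : t ≤ x
      · exact absurd (h2.2 ⟨hxK, ht⟩) (not_le.2 hx2)
      exact hKe x ⟨⟨(not_le.1 hs).le, (not_le.1 ht).le⟩, hxK⟩
    by_contra hne'
    have hd := dist_pos.2 hne'
    obtain ⟨δ₁, hδ₁, h₁⟩ := Metric.continuousAt_iff.1 (hf.continuousAt (x := a)) _ (half_pos hd)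
    obtain ⟨δ₂, hδ₂, h₂⟩ := Metric.continuousAt_iff.1 (hf.continuousAt (x := b)) _ (half_pos hd)
    have hm1 : min (min δ₁ δ₂) (b - a) ≤ δ₁ := (min_le_left _ _).trans (min_le_left _ _)
    have hm2 : min (min δ₁ δ₂) (b - a) ≤ δ₂ := (min_le_left _ _).trans (min_le_right _ _)
    have hm3 : min (min δ₁ δ₂) (b - a) ≤ b - a := min_le_right _ _
    have hm0 : 0 < min (min δ₁ δ₂) (b - a) := lt_min (lt_min hδ₁ hδ₂) (by linarith)
    generalize min (min δ₁ δ₂) (b - a) = m at hm0 hm1 hm2 hm3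
    obtain ⟨a', ha', b', hb', hab'⟩ := key (a + m / 3) (b - m / 3) (by linarith) (by linarith)
      (by linarith)
    have e1 := h₁ (x := a') (by rw [Real.dist_eq, abs_lt]; constructor <;> linarith [ha'.1, ha'.2])
    have e2 := h₂ (x := b') (by rw [Real.dist_eq, abs_lt]; constructor <;> linarith [hb'.1, hb'.2])
    have := dist_triangle_left (f a) (f b) (f a')
    rw [← hab'] at e2
    linarith)
  obtain ⟨⟨hcl, hsub, hg⟩, hmin⟩ := hK
  refine ⟨K, hcl, hsub, hg, ?_⟩
  intro a ha b hb h0 hab h1 hfab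
  have hS : K \ Ioo a b ∈ S := by
    refine ⟨hcl.sdiff isOpen_Ioo, ?_, ?_⟩
    · intro x hx
      refine ⟨hsub hx, fun hx' => ?_⟩
      rcases hx with hx | hx
      · exact absurd (h0.trans_lt hx'.1) (not_lt.2 hx)
      · exact absurd (hx'.2.trans_le h1) (not_lt.2 hx)
    · intro c hc d hd hcd hgap
      rw [eq_empty_iff_forall_notMem] at hgap
      have na : ¬ (c < a ∧ a < d) := fun h => hgap a ⟨h, ha, fun h => lt_irrefl _ h.1⟩
      have nb : ¬ (c < b ∧ b < d) := fun h => hgap b ⟨h, hb, fun h => lt_irrefl _ h.2⟩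
      by_cases hda : d ≤ a
      · apply hg c hc.1 d hd.1 hcd
        rw [eq_empty_iff_forall_notMem]
        exact fun x hx => hgap x ⟨hx.1, hx.2, fun h => by linarith [h.1, hx.1.2]⟩
      by_cases hcb : b ≤ c
      · apply hg c hc.1 d hd.1 hcd
        rw [eq_empty_iff_forall_notMem]
        exact fun x hx => hgap x ⟨hx.1, hx.2, fun h => by linarith [h.2, hx.1.1]⟩
      push Not at hda hcb
      have hca : a ≤ c := not_lt.1 fun h => na ⟨h, hda⟩
      have hdb : d ≤ b := not_lt.1 fun h => nb ⟨hcb, h⟩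
      have hca' : c = a := by
        by_contra h
        exact hc.2 ⟨lt_of_le_of_ne hca (Ne.symm h), hcb⟩
      have hdb' : d = b := by
        by_contra h
        exact hd.2 ⟨hda, lt_of_le_of_ne hdb h⟩
      rw [hca', hdb', hfab]
  have := hmin hS sdiff_subset
  rw [eq_empty_iff_forall_notMem]
  exact fun x hx => (this hx.2).2 hx.1

lemma exists_arc_of_path {X : Type*} [MetricSpace X] (f : ℝ → X) (hf : Continuous f)
    (hne : f 0 ≠ f 1) :
    ∃ g : ℝ → X, ContinuousOn g (Icc 0 1) ∧ InjOn g (Icc 0 1) ∧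
      g '' Icc 0 1 ⊆ f '' Icc 0 1 ∧ g 0 = f 0 ∧ g 1 = f 1 := by
  obtain ⟨K, hcl, hsub, hg, hmin⟩ := exists_minimal_closed f hf
  have hp : ∀ t, ∃ p, IsGreatest (K ∩ Iic t) p := fun t =>
    ⟨_, (hcl.inter isClosed_Iic).isGreatest_csSup
      ⟨min t 0, hsub (Or.inl (mem_Iic.2 (min_le_right _ _))), mem_Iic.2 (min_le_left _ _)⟩ ⟨t, fun x hx => hx.2⟩⟩
  have hn : ∀ t, ∃ p, IsLeast (K ∩ Ici t) p := fun t =>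
    ⟨_, (hcl.inter isClosed_Ici).isLeast_csInf
      ⟨max t 1, hsub (Or.inr (mem_Ici.2 (le_max_right _ _))), mem_Ici.2 (le_max_left _ _)⟩ ⟨t, fun x hx => hx.2⟩⟩
  choose p hp using hp
  choose n hn using hn
  have hpK : ∀ t, p t ∈ K := fun t => (hp t).1.1
  have hnK : ∀ t, n t ∈ K := fun t => (hn t).1.1
  have hpt : ∀ t, p t ≤ t := fun t => (hp t).1.2
  have hnt : ∀ t, t ≤ n t := fun t => (hn t).1.2
  have hpu : ∀ t, ∀ x ∈ K, x ≤ t → x ≤ p t := fun t x hx h => (hp t).2 ⟨hx, h⟩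
  have hnu : ∀ t, ∀ x ∈ K, t ≤ x → n t ≤ x := fun t x hx h => (hn t).2 ⟨hx, h⟩
  have hpn : ∀ t, f (p t) = f (n t) := by
    intro t
    rcases eq_or_lt_of_le ((hpt t).trans (hnt t)) with h | h
    · rw [h]
    · apply hg _ (hpK t) _ (hnK t) h
      rw [eq_empty_iff_forall_notMem]
      rintro x ⟨⟨hx1, hx2⟩, hxK⟩
      rcases le_total x t with h | h
      · linarith [hpu t x hxK h]
      · linarith [hnu t x hxK h]
  have hpeq : ∀ t ∈ K, p t = t := fun t ht => le_antisymm (hpt t) (hpu t t ht le_rfl)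
  have hpmono : Monotone p := fun s t hst => hpu t _ (hpK s) ((hpt s).trans hst)
  have h0K : (0 : ℝ) ∈ K := hsub (Or.inl (mem_Iic.2 le_rfl))
  have h1K : (1 : ℝ) ∈ K := hsub (Or.inr (mem_Ici.2 le_rfl))
  have hc : Continuous (fun t => f (p t)) := by
    rw [continuous_iff_continuousAt]
    intro t0
    by_cases ht0 : t0 ∈ K
    · rw [Metric.continuousAt_iff]
      intro ε hε
      obtain ⟨δ, hδ, h⟩ := Metric.continuousAt_iff.1 (hf.continuousAt (x := t0)) ε hε
      refine ⟨δ, hδ, fun {t} ht => ?_⟩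
      rw [Real.dist_eq, abs_lt] at ht
      rw [hpeq t0 ht0]
      rcases le_total t0 t with h' | h'
      · apply h
        rw [Real.dist_eq, abs_lt]
        constructor <;> linarith [hpu t t0 ht0 h', hpt t]
      · rw [hpn t]
        apply h
        rw [Real.dist_eq, abs_lt]
        constructor <;> linarith [hnu t t0 ht0 h', hnt t]
    · have h1 : p t0 < t0 := lt_of_le_of_ne (hpt t0) fun h => ht0 (h ▸ hpK t0)
      have h2 : t0 < n t0 := lt_of_le_of_ne (hnt t0) fun h => ht0 (h ▸ hnK t0)
      have : (fun t => f (p t)) =ᶠ[𝓝 t0] fun _ => f (p t0) := by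
        filter_upwards [Ioo_mem_nhds h1 h2] with t ht
        congr 1
        apply le_antisymm
        · apply hpu _ _ (hpK t)
          by_contra h
          linarith [hnu t0 _ (hpK t) (not_le.1 h).le, hpt t, ht.2]
        · exact hpu _ _ (hpK t0) ht.1.le
      exact continuousAt_const.congr this.symm
  have e0 : f (p 0) = f 0 := by rw [hpeq 0 h0K]
  have e1 : f (p 1) = f 1 := by rw [hpeq 1 h1K]
  obtain ⟨g, hgc, hgi, him, hg0, hg1⟩ := exists_reparam (fun t => f (p t)) hc (by
    intro a b t ha hat htb hb hab
    have l1 := hpmono hat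
    have l2 := hpmono htb
    rcases eq_or_lt_of_le l1 with h | h
    · rw [h]
    rcases eq_or_lt_of_le l2 with h' | h'
    · rw [h', hab]
    have := hmin _ (hpK a) _ (hpK b) (hpu a 0 h0K ha) (h.trans h') ((hpt b).trans hb) hab
    rw [eq_empty_iff_forall_notMem] at this
    exact absurd ⟨⟨h, h'⟩, hpK t⟩ (this (p t))) (by rwa [e0, e1])
  refine ⟨g, hgc, hgi, him.trans ?_, hg0.trans e0, hg1.trans e1⟩
  rintro _ ⟨t, ht, rfl⟩
  exact ⟨p t, ⟨hpu t 0 h0K ht.1, (hpt t).trans ht.2⟩, rfl⟩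

lemma acc_step {X : Type*} [TopologicalSpace X] {Γ V V' : Set X} {x z : X}
    (hz : LocFin Γ z) (hV' : IsOpen V') (hzV' : z ∈ V') (hVV : V' ⊆ V)
    (hx : z ∈ closure {y | JoinedIn (V \ Γ) x y}) :
    ∃ y, JoinedIn (V \ Γ) x y ∧ z ∈ closure {w | JoinedIn (V' \ Γ) y w} := by
  obtain ⟨W, hWo, hzW, hWV, B, hB, hWB⟩ := hz V' hV' hzV'
  have h1 : z ∈ closure (W ∩ {y | JoinedIn (V \ Γ) x y}) := hWo.inter_closure ⟨hzW, hx⟩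
  have hB' : (B ∩ {b | JoinedIn (V \ Γ) x b}).Finite := hB.subset inter_subset_left
  have h2 : W ∩ {y | JoinedIn (V \ Γ) x y} ⊆
      ⋃ b ∈ B ∩ {b | JoinedIn (V \ Γ) x b}, {w | JoinedIn (V' \ Γ) b w} := by
    rintro y ⟨hyW, hy⟩
    have hyΓ : y ∉ Γ := (JoinedIn.target_mem hy).2
    obtain ⟨b, hb, hby⟩ := hWB y ⟨hyW, hyΓ⟩
    simp only [mem_iUnion]
    refine ⟨b, ⟨hb, ?_⟩, hby⟩
    exact JoinedIn.trans hy (hby.symm.mono (sdiff_subset_sdiff_left hVV))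
  have h3 := closure_mono h2 h1
  rw [hB'.closure_biUnion] at h3
  simp only [mem_iUnion] at h3
  obtain ⟨b, hb, hzb⟩ := h3
  exact ⟨b, hb.2, hzb⟩

lemma ray_of_seq {X : Type*} [TopologicalSpace X] (y : ℕ → X) (V : ℕ → Set X)
    (hV : Antitone V) (h : ∀ n, JoinedIn (V n) (y n) (y (n + 1))) :
    ∃ g : ℝ → X, Continuous g ∧ g 0 = y 0 ∧ ∀ n : ℕ, ∀ t : ℝ, n ≤ t → g t ∈ V n := by
  choose α hα using h
  let g : ℝ → X := fun t => (α ⌊t⌋₊).extend (t - ⌊t⌋₊)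
  have hIcc : ∀ n : ℕ, ∀ t ∈ Icc (n : ℝ) (n + 1), g t = (α n).extend (t - n) := by
    intro n t ht
    have h0 : (0 : ℝ) ≤ n := n.cast_nonneg
    rcases eq_or_lt_of_le ht.2 with h | h
    · have : ⌊t⌋₊ = n + 1 := by
        rw [h]; exact_mod_cast Nat.floor_natCast (R := ℝ) (n + 1)
      simp only [g]
      rw [this, h]
      push_cast
      simp
    · have : ⌊t⌋₊ = n := (Nat.floor_eq_iff (h0.trans ht.1)).2 ⟨ht.1, h⟩
      simp only [g]
      rw [this]
  have hneg : ∀ t ≤ (0 : ℝ), g t = y 0 := by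
    intro t ht
    have : ⌊t⌋₊ = 0 := Nat.floor_of_nonpos ht
    simp only [g]
    rw [this]
    exact Path.extend_of_le_zero _ (by simpa using ht)
  have hc : ∀ n : ℕ, ContinuousOn g (Iic (n : ℝ)) := by
    intro n
    induction n with
    | zero =>
      refine continuousOn_const.congr (f := fun _ => y 0) fun t ht => hneg t ?_
      simpa using ht
    | succ n ih =>
      have : Iic ((n + 1 : ℕ) : ℝ) = Iic (n : ℝ) ∪ Icc (n : ℝ) (n + 1) := by
        rw [Iic_union_Icc_eq_Iic (by linarith)]; push_cast; rfl
      rw [this]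
      refine ih.union_of_isClosed ?_ isClosed_Iic isClosed_Icc
      refine ContinuousOn.congr (f := fun t => (α n).extend (t - n)) ?_ (hIcc n)
      exact ((α n).continuous_extend.comp (continuous_id.sub continuous_const)).continuousOn
  refine ⟨g, ?_, hneg 0 le_rfl, ?_⟩
  · rw [continuous_iff_continuousAt]
    intro t
    obtain ⟨n, hn⟩ := exists_nat_gt t
    exact (hc n).continuousAt (Iic_mem_nhds hn)
  · intro n t ht
    have h0 : (0 : ℝ) ≤ t := n.cast_nonneg.trans ht
    have hn : n ≤ ⌊t⌋₊ := Nat.le_floor ht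
    apply hV hn
    have hmem : t - ⌊t⌋₊ ∈ Icc (0 : ℝ) 1 :=
      ⟨sub_nonneg.2 (Nat.floor_le h0), by linarith [Nat.lt_floor_add_one t]⟩
    simp only [g]
    rw [Path.extend_apply _ hmem]
    exact hα _ _

lemma joinedIn_of_ray {X : Type*} [TopologicalSpace X] (g : ℝ → X) (hg : Continuous g)
    (z : X) (hz : Filter.Tendsto g Filter.atTop (𝓝 z)) (S : Set X)
    (hS : ∀ t, 0 ≤ t → g t ∈ S) : JoinedIn (insert z S) (g 0) z := by
  classical
  let h : ℝ → X := fun s => if s < 1 then g (s / (1 - s)) else z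
  have hlt : ∀ s < 1, h s = g (s / (1 - s)) := fun s hs => if_pos hs
  have h1 : h 1 = z := if_neg (lt_irrefl _)
  refine JoinedIn.ofLine (f := h) ?_ ?_ h1 ?_
  · intro s hs
    rcases eq_or_lt_of_le hs.2 with hs1 | hs1
    · subst hs1
      have hsub : Icc (0 : ℝ) 1 ⊆ insert 1 (Iio 1) := by
        intro t ht
        rcases eq_or_lt_of_le ht.2 with e | e
        · exact Or.inl e
        · exact Or.inr e
      refine ContinuousWithinAt.mono ?_ hsub
      rw [continuousWithinAt_insert_self]
      unfold ContinuousWithinAt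
      rw [h1]
      have e : (fun s : ℝ => g (s / (1 - s))) =ᶠ[𝓝[<] 1] h := by
        filter_upwards [self_mem_nhdsWithin] with t ht
        exact (hlt t ht).symm
      refine Filter.Tendsto.congr' e (hz.comp ?_)
      have a1 : Filter.Tendsto (fun s : ℝ => (1 - s)⁻¹) (𝓝[<] 1) Filter.atTop := by
        refine tendsto_inv_nhdsGT_zero.comp ?_
        rw [tendsto_nhdsWithin_iff]
        constructor
        · have : Filter.Tendsto (fun s : ℝ => 1 - s) (𝓝 1) (𝓝 (1 - 1)) :=
            (continuous_const.sub continuous_id).tendsto _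
          rw [sub_self] at this
          exact this.mono_left nhdsWithin_le_nhds
        · filter_upwards [self_mem_nhdsWithin] with t ht
          exact sub_pos.2 (mem_Iio.1 ht)
      have a2 : Filter.Tendsto (fun s : ℝ => s) (𝓝[<] 1) (𝓝 1) :=
        Filter.tendsto_id.mono_left nhdsWithin_le_nhds
      exact a2.pos_mul_atTop one_pos a1
    · apply ContinuousAt.continuousWithinAt
      have e : (fun s : ℝ => g (s / (1 - s))) =ᶠ[𝓝 s] h := by
        filter_upwards [Iio_mem_nhds hs1] with t ht
        exact (hlt t ht).symm
      refine ContinuousAt.congr ?_ e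
      refine hg.continuousAt.comp ?_
      exact continuousAt_id.div (continuousAt_const.sub continuousAt_id) (sub_pos.2 hs1).ne'
  · rw [hlt 0 one_pos]; simp
  · rintro _ ⟨s, hs, rfl⟩
    rcases eq_or_lt_of_le hs.2 with hs1 | hs1
    · subst hs1; rw [h1]; exact mem_insert _ _
    · rw [hlt s hs1]
      exact Or.inr (hS _ (div_nonneg hs.1 (sub_pos.2 hs1).le))

lemma accessible {X : Type*} [TopologicalSpace X] [FirstCountableTopology X] {Γ V : Set X} {x z : X}
    (hz : LocFin Γ z) (hV : IsOpen V) (hzV : z ∈ V)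
    (hx : z ∈ closure {y | JoinedIn (V \ Γ) x y}) :
    JoinedIn (insert z (V \ Γ)) x z := by
  obtain ⟨U, hU⟩ := (𝓝 z).exists_antitone_basis
  let V' : ℕ → Set X := fun n => match n with
    | 0 => V
    | n + 1 => interior (U n) ∩ V
  have hV'o : ∀ n, IsOpen (V' n) := by
    rintro (_ | n)
    · exact hV
    · exact isOpen_interior.inter hV
  have hV'z : ∀ n, z ∈ V' n := by
    rintro (_ | n)
    · exact hzV
    · exact ⟨mem_interior_iff_mem_nhds.2 (hU.mem n), hzV⟩
  have hanti : Antitone V' := by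
    refine antitone_nat_of_succ_le ?_
    rintro (_ | n)
    · exact inter_subset_right
    · exact inter_subset_inter_left _ (interior_mono (hU.antitone (Nat.le_succ n)))
  have step : ∀ n (x : {x // z ∈ closure {y | JoinedIn (V' n \ Γ) x y}}),
      ∃ y : {x // z ∈ closure {y | JoinedIn (V' (n + 1) \ Γ) x y}},
        JoinedIn (V' n \ Γ) x.1 y.1 := by
    intro n x
    obtain ⟨y, hy, hy'⟩ := acc_step hz (hV'o (n + 1)) (hV'z (n + 1)) (hanti (Nat.le_succ n)) x.2
    exact ⟨⟨y, hy'⟩, hy⟩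
  choose s hs using step
  let q : (n : ℕ) → {x // z ∈ closure {y | JoinedIn (V' n \ Γ) x y}} :=
    fun n => Nat.rec ⟨x, hx⟩ (fun n y => s n y) n
  obtain ⟨g, hg, hg0, hgV⟩ := ray_of_seq (fun n => (q n).1) (fun n => V' n \ Γ)
    (fun m n hmn => sdiff_subset_sdiff_left (hanti hmn)) (fun n => hs n (q n))
  have hg0' : g 0 = x := hg0
  have := joinedIn_of_ray g hg z (by
    rw [hU.tendsto_right_iff]
    intro n _
    filter_upwards [Filter.eventually_ge_atTop ((n + 1 : ℕ) : ℝ)] with t ht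
    exact interior_subset (hgV (n + 1) t ht).1.1) (V \ Γ) (by
    intro t ht
    exact hgV 0 t (by simpa using ht))
  rwa [hg0'] at this

lemma bounded_general {X : Type*} [MetricSpace X] (Γ L D : Set X) (hDo : IsOpen D)
    (hDc : IsPreconnected D) (hΓ : ∀ p, LocFin Γ p ∧ p ∈ closure Γᶜ)
    (hL : IsCompact L) (hLD : L ⊆ D) :
    ∃ N : ℕ, ∀ z₁ ∈ L, ∀ z₂ ∈ L, z₁ ≠ z₂ → ∃ g : ℝ → X, ContinuousOn g (Icc 0 1) ∧
      InjOn g (Icc 0 1) ∧ g 0 = z₁ ∧ g 1 = z₂ ∧ g '' Icc 0 1 ⊆ D ∧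
      (g '' Icc 0 1 ∩ Γ).encard ≤ N := by
  let R : ℕ → X → X → Prop := fun n x y => ∃ γ : Path x y, range γ ⊆ D ∧
    (range γ ∩ Γ).encard ≤ n
  have Rmono : ∀ {m n x y}, m ≤ n → R m x y → R n x y := by
    rintro m n x y hmn ⟨γ, h1, h2⟩
    exact ⟨γ, h1, h2.trans (by exact_mod_cast hmn)⟩
  have Rsymm : ∀ {n x y}, R n x y → R n y x := by
    rintro n x y ⟨γ, h1, h2⟩
    refine ⟨γ.symm, ?_, ?_⟩ <;> rw [Path.symm_range] <;> assumption
  have Rtrans : ∀ {m n x y z}, R m x y → R n y z → R (m + n) x z := by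
    rintro m n x y z ⟨γ, h1, h2⟩ ⟨γ', h1', h2'⟩
    refine ⟨γ.trans γ', ?_, ?_⟩
    · rw [Path.trans_range]; exact union_subset h1 h1'
    · rw [Path.trans_range, union_inter_distrib_right]
      refine (encard_union_le _ _).trans ?_
      push_cast
      exact add_le_add h2 h2'
  have Racc : ∀ b, ∀ z ∈ D, z ∈ closure {y | JoinedIn (D \ Γ) b y} → R 1 b z := by
    intro b z hz h
    obtain ⟨γ, hγ⟩ := accessible (hΓ z).1 hDo hz h
    refine ⟨γ, ?_, ?_⟩
    · rintro _ ⟨t, rfl⟩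
      rcases hγ t with e | e
      · rw [e]; exact hz
      · exact e.1
    · have : range γ ∩ Γ ⊆ {z} := by
        rintro _ ⟨⟨t, rfl⟩, ht⟩
        rcases hγ t with e | e
        · exact e
        · exact absurd ht e.2
      refine (encard_le_encard this).trans ?_
      simp
  have cover : ∀ p, ∃ W : Set X, ∃ B : Set X, p ∈ D → IsOpen W ∧ p ∈ W ∧ W ⊆ D ∧ B.Finite ∧
      B ⊆ D ∧ ∀ x ∈ W, ∃ b ∈ B, x ∈ closure {y | JoinedIn (D \ Γ) b y} := by
    intro p
    by_cases hp : p ∈ D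
    swap
    · exact ⟨∅, ∅, fun h => absurd h hp⟩
    obtain ⟨W, hWo, hpW, hWD, B, hB, hWB⟩ := (hΓ p).1 D hDo hp
    refine ⟨W, B ∩ D, fun _ => ⟨hWo, hpW, hWD, hB.subset inter_subset_left,
      inter_subset_right, ?_⟩⟩
    intro x hx
    have h1 : x ∈ closure (W ∩ Γᶜ) := hWo.inter_closure ⟨hx, (hΓ x).2⟩
    have h2 : W ∩ Γᶜ ⊆ ⋃ b ∈ B ∩ D, {y | JoinedIn (D \ Γ) b y} := by
      rintro y ⟨hyW, hyΓ⟩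
      obtain ⟨b, hb, hby⟩ := hWB y ⟨hyW, hyΓ⟩
      simp only [mem_iUnion]
      exact ⟨b, ⟨hb, hby.source_mem.1⟩, hby⟩
    have h3 := closure_mono h2 h1
    rw [(hB.subset inter_subset_left).closure_biUnion] at h3
    simp only [mem_iUnion] at h3
    obtain ⟨b, hb, hzb⟩ := h3
    exact ⟨b, hb, hzb⟩
  choose W B hWB using cover
  have conn : ∀ x ∈ D, ∀ y ∈ D, ∃ n, R n x y := by
    intro x hx y hy
    refine hDc.induction₂ (fun x y => ∃ n, R n x y) ?_ ?_ ?_ hx hy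
    · intro p hp
      obtain ⟨hWo, hpW, hWD, hB, hBD, hcov⟩ := hWB p hp
      refine nhdsWithin_le_nhds ?_
      let B' : Set X := B p ∩ {b | p ∉ closure {y | JoinedIn (D \ Γ) b y}}
      have hB' : B'.Finite := hB.subset inter_subset_left
      have hcl : IsClosed (⋃ b ∈ B', closure {y | JoinedIn (D \ Γ) b y}) :=
        hB'.isClosed_biUnion fun b _ => isClosed_closure
      have hpn : p ∉ ⋃ b ∈ B', closure {y | JoinedIn (D \ Γ) b y} := by
        simp only [mem_iUnion, not_exists]
        intro b hb h
        exact hb.2 h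
      filter_upwards [hWo.mem_nhds hpW, hcl.isOpen_compl.mem_nhds hpn] with x hxW hxn
      obtain ⟨b, hb, hxb⟩ := hcov x hxW
      have hpb : p ∈ closure {y | JoinedIn (D \ Γ) b y} := by
        by_contra hc
        apply hxn
        simp only [mem_iUnion]
        exact ⟨b, ⟨hb, hc⟩, hxb⟩
      exact ⟨_, Rtrans (Rsymm (Racc b p hp hpb)) (Racc b x (hWD hxW) hxb)⟩
    · rintro x y z - - - ⟨m, hm⟩ ⟨n, hn⟩
      exact ⟨_, Rtrans hm hn⟩
    · rintro x y - - ⟨m, hm⟩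
      exact ⟨_, Rsymm hm⟩
  obtain ⟨T, hTL, hT⟩ := hL.elim_nhds_subcover W fun x hx =>
    (hWB x (hLD hx)).1.mem_nhds (hWB x (hLD hx)).2.1
  let B₀ : Set X := ⋃ p ∈ T, B p
  have hB₀ : B₀.Finite := T.finite_toSet.biUnion fun p hp => (hWB p (hLD (hTL p hp))).2.2.2.1
  have hB₀D : B₀ ⊆ D := iUnion₂_subset fun p hp => (hWB p (hLD (hTL p hp))).2.2.2.2.1
  have hn : ∀ q : X × X, ∃ n, q ∈ B₀ ×ˢ B₀ → R n q.1 q.2 := by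
    intro q
    by_cases hq : q ∈ B₀ ×ˢ B₀
    · obtain ⟨n, hn⟩ := conn q.1 (hB₀D hq.1) q.2 (hB₀D hq.2)
      exact ⟨n, fun _ => hn⟩
    · exact ⟨0, fun h => absurd h hq⟩
  choose n hn using hn
  obtain ⟨M, hM⟩ := ((hB₀.prod hB₀).image n).bddAbove
  have base : ∀ z ∈ L, ∃ b ∈ B₀, R 1 b z := by
    intro z hz
    have := hT hz
    simp only [mem_iUnion] at this
    obtain ⟨p, hp, hzp⟩ := this
    obtain ⟨b, hb, hzb⟩ := (hWB p (hLD (hTL p hp))).2.2.2.2.2 z hzp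
    exact ⟨b, mem_biUnion hp hb, Racc b z (hLD hz) hzb⟩
  refine ⟨1 + M + 1, fun z₁ hz₁ z₂ hz₂ hne => ?_⟩
  obtain ⟨b₁, hb₁, h₁⟩ := base z₁ hz₁
  obtain ⟨b₂, hb₂, h₂⟩ := base z₂ hz₂
  have hb : R M b₁ b₂ := Rmono (hM (mem_image_of_mem n (mk_mem_prod hb₁ hb₂)))
    (hn (b₁, b₂) (mk_mem_prod hb₁ hb₂))
  obtain ⟨γ, hγD, hγ⟩ := Rtrans (Rtrans (Rsymm h₁) hb) h₂
  obtain ⟨g, hgc, hgi, him, hg0, hg1⟩ := exists_arc_of_path γ.extend γ.continuous_extend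
    (by simpa using hne)
  have hr : g '' Icc 0 1 ⊆ range γ := by
    refine him.trans ?_
    rintro _ ⟨t, ht, rfl⟩
    rw [Path.extend_apply _ ht]
    exact mem_range_self _
  refine ⟨g, hgc, hgi, by simpa using hg0, by simpa using hg1, hr.trans hγD, ?_⟩
  exact (encard_le_encard (inter_subset_inter_left _ hr)).trans hγ

end Helpers

/-!
STATEMENT 14 (Lemma 4.1): Let `Γ ⊆ ℂ̂` be a finite disjoint union of Jordan
curves, `L ⊆ ℂ̂` compact, and `D` a Jordan domain containing `L`.  Then there
is `N ≥ 0` such that any two distinct points of `L` can be joined by a Jordan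
arc `δ ⊆ D` meeting `Γ` in at most `N` points.
-/
theorem jordan_arc_bounded_intersections (Γ L D : Set (OnePoint ℂ))
    (hΓ : ∃ (k : ℕ) (C : Fin k → Set (OnePoint ℂ)),
      (∀ i, IsJordanCurveS (C i)) ∧
      (Pairwise fun i i' => Disjoint (C i) (C i')) ∧ Γ = ⋃ i, C i)
    (hL : IsCompact L)
    (hD : ∃ C : Set (OnePoint ℂ), IsJordanCurveS C ∧
      ∃ x ∈ Cᶜ, D = connectedComponentIn Cᶜ x)
    (hLD : L ⊆ D) :
    ∃ N : ℕ, ∀ z₁ ∈ L, ∀ z₂ ∈ L, z₁ ≠ z₂ →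
      ∃ δ : Set (OnePoint ℂ), IsJordanArcS δ z₁ z₂ ∧ δ ⊆ D ∧
        (δ ∩ Γ).Finite ∧ (δ ∩ Γ).ncard ≤ N := by
  classical
  obtain ⟨k, C, hC, hd, rfl⟩ := hΓ
  obtain ⟨C', ⟨f, hf, -, rfl⟩, x, hx, rfl⟩ := hD
  have hlp := locPath_onePoint
  have hmet := metrizable_onePoint
  have hopen : IsOpen (connectedComponentIn (Set.range f)ᶜ x) :=
    (isCompact_range hf).isClosed.isOpen_compl.connectedComponentIn
  let _ : MetricSpace (OnePoint ℂ) := TopologicalSpace.metrizableSpaceMetric (OnePoint ℂ)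
  obtain ⟨N, hN⟩ := bounded_general (⋃ i, C i) L _ hopen isPreconnected_connectedComponentIn
    (fun p => (union_local C hC hd p).2) hL hLD
  refine ⟨N, fun z₁ h₁ z₂ h₂ hne => ?_⟩
  obtain ⟨g, hgc, hgi, hg0, hg1, hgD, hgN⟩ := hN z₁ h₁ z₂ h₂ hne
  have hfin : (g '' Set.Icc 0 1 ∩ ⋃ i, C i).Finite :=
    Set.finite_of_encard_le_coe hgN
  refine ⟨g '' Set.Icc 0 1, ⟨g, hgc, hgi, rfl, hg0, hg1⟩, hgD, hfin, ?_⟩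
  rw [← hfin.cast_ncard_eq] at hgN
  exact_mod_cast hgN

end
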